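/- Let D be an abelian category with arbitrary small coproducts carrying a closed symmetric monoidal structure whose tensor product is additive in each variable, and assume that D has no nontrivial localizing tensor-ideal. Let A be a flat object of D and η : 𝟙 ⟶ A a morphism such that A ◁ η : A ⟶ A ⊗ A (the identity of A tensored with η) is a split monomorphism (i.e., (A, η) is a weak ring). Then either A is a zero object or η is a monomorphism. -/

import Mathlib

open CategoryTheory CategoryTheory.Limits CategoryTheory.MonoidalCategory

universe v u

/-- A localizing tensor-ideal of an abelian monoidal category with coproducts:
a class of objects closed under isomorphisms, subobjects, quotient objects,
extensions, arbitrary (small) coproducts, and tensoring with arbitrary objects. -/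
def IsLocalizingTensorIdeal {D : Type u} [Category.{v} D] [Abelian D]
    [MonoidalCategory D] [HasCoproducts.{v} D] (S : Set D) : Prop :=
  (∀ (M N : D), (M ≅ N) → M ∈ S → N ∈ S) ∧
  (∀ (M N : D) (f : N ⟶ M), Mono f → M ∈ S → N ∈ S) ∧
  (∀ (M N : D) (f : M ⟶ N), Epi f → M ∈ S → N ∈ S) ∧
  (∀ (T : ShortComplex D), T.ShortExact → T.X₁ ∈ S → T.X₃ ∈ S → T.X₂ ∈ S) ∧
  (∀ (ι : Type v) (f : ι → D), (∀ i, f i ∈ S) → (∐ f) ∈ S) ∧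
  (∀ (N M : D), M ∈ S → (N ⊗ M) ∈ S)

/-!
Tensoring with a flat object `A` is exact and preserves coproducts, so the objects `M` with
`A ⊗ M = 0` form a localizing tensor-ideal. If this ideal is everything, it contains the unit, and
`A ≅ A ⊗ 𝟙` vanishes. Otherwise it is zero; by flatness it contains the kernel of every morphism
that becomes a monomorphism after tensoring with `A`, so each such morphism, in particular the unit
of a weak ring, is already a monomorphism.
-/

section

variable {C E : Type*} [Category* C] [Category* E]

instance isClosedUnderColimitsOfShape_isZero [HasZeroObject C] [HasZeroMorphisms C]
    (J : Type*) [Category* J] :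
    ObjectProperty.IsClosedUnderColimitsOfShape (IsZero (C := C)) J where
  colimitsOfShape_le := by
    rintro _ ⟨presentation⟩
    exact presentation.isColimit.isZero_pt (Functor.isZero _ presentation.prop_diag_obj)

lemma isZero_obj_kernel_iff_mono_map [HasZeroMorphisms C] [Preadditive E]
    (F : C ⥤ E) [F.PreservesZeroMorphisms] {X Y : C} (f : X ⟶ Y) [HasKernel f]
    [PreservesLimit (parallelPair f 0) F] :
    IsZero (F.obj (kernel f)) ↔ Mono (F.map f) :=
  (Preadditive.mono_iff_isZero_kernel' _ (KernelFork.mapIsLimit _ (kernelIsKernel f) F)).symm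

end

/-- The annihilator of `A`: the class of objects `M` with `A ⊗ M = 0`, expressed as the kernel of
the functor `A ⊗ -`. It is the localizing tensor-ideal attached to a flat object `A`. -/
def tensorAnnihilator {D : Type*} [Category* D] [MonoidalCategory D] (A : D) :
    ObjectProperty D :=
  ObjectProperty.inverseImage IsZero (tensorLeft A)

lemma tensorAnnihilator_tensor {D : Type*} [Category* D] [Preadditive D] [MonoidalCategory D]
    [MonoidalPreadditive D] [BraidedCategory D] {A M : D} (hM : tensorAnnihilator A M) (N : D) :
    tensorAnnihilator A (N ⊗ M) :=
  have swap : A ⊗ (N ⊗ M) ≅ N ⊗ (A ⊗ M) :=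
    (α_ A N M).symm ≪≫ whiskerRightIso (β_ A N) M ≪≫ α_ N A M
  IsZero.of_iso ((tensorLeft N).map_isZero hM) swap

lemma tensorAnnihilator_unit_iff {D : Type*} [Category* D] [MonoidalCategory D] {A : D} :
    tensorAnnihilator A (𝟙_ D) ↔ IsZero A :=
  (ρ_ A).isZero_iff

section

variable {D : Type u} [Category.{v} D] [Abelian D] [MonoidalCategory D] [MonoidalPreadditive D]
  [BraidedCategory D] [HasCoproducts.{v} D] (A : D) [PreservesFiniteLimits (tensorLeft A)]
  [PreservesFiniteColimits (tensorLeft A)]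
  [∀ ι : Type v, PreservesColimitsOfShape (Discrete ι) (tensorLeft A)]

theorem isLocalizingTensorIdeal_tensorAnnihilator :
    IsLocalizingTensorIdeal (tensorAnnihilator A) := by
  have serre : (tensorAnnihilator A).IsSerreClass :=
    inferInstanceAs (ObjectProperty.inverseImage _ _).IsSerreClass
  have coproducts (ι : Type v) :
      (tensorAnnihilator A).IsClosedUnderColimitsOfShape (Discrete ι) :=
    inferInstanceAs ((ObjectProperty.inverseImage _ _).IsClosedUnderColimitsOfShape _)
  exact ⟨fun _ _ e hM ↦ (tensorAnnihilator A).prop_of_iso e hM,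
    fun _ _ f _ hM ↦ (tensorAnnihilator A).prop_of_mono f hM,
    fun _ _ f _ hM ↦ (tensorAnnihilator A).prop_of_epi f hM,
    fun _ hT h₁ h₃ ↦ (tensorAnnihilator A).prop_X₂_of_shortExact hT h₁ h₃,
    fun _ _ hf ↦ (tensorAnnihilator A).prop_colimit _ fun j ↦ hf j.as,
    fun N _ hM ↦ tensorAnnihilator_tensor hM N⟩

theorem weakRing_isZero_or_mono_unit_general
    (hD : ∀ S : Set D, IsLocalizingTensorIdeal S → S = {M : D | IsZero M} ∨ S = Set.univ)
    {X Y : D} (f : X ⟶ Y) [Mono (A ◁ f)] :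
    IsZero A ∨ Mono f := by
  rcases hD _ (isLocalizingTensorIdeal_tensorAnnihilator A) with eq_zero | eq_univ
  · right
    have kernel_mem : tensorAnnihilator A (kernel f) :=
      (isZero_obj_kernel_iff_mono_map (tensorLeft A) f).2 ‹Mono (A ◁ f)›
    exact Preadditive.mono_of_isZero_kernel f ((Set.ext_iff.1 eq_zero _).1 kernel_mem)
  · left
    exact tensorAnnihilator_unit_iff.1 (Set.eq_univ_iff_forall.1 eq_univ (𝟙_ D))

end

/-- In an abelian closed symmetric monoidal category with coproducts and with no nontrivial
localizing tensor-ideal, a flat weak ring `(A, η)` is either zero or has monic unit. -/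
theorem weakRing_isZero_or_mono_unit
    {D : Type u} [Category.{v} D] [Abelian D] [MonoidalCategory D]
    [SymmetricCategory D] [MonoidalClosed D] [MonoidalPreadditive D]
    [HasCoproducts.{v} D]
    (hD : ∀ S : Set D, IsLocalizingTensorIdeal S →
      S = {M : D | IsZero M} ∨ S = Set.univ)
    (A : D) (hA₁ : PreservesFiniteLimits (tensorLeft A))
    (hA₂ : PreservesFiniteColimits (tensorLeft A))
    (η : 𝟙_ D ⟶ A) (hη : IsSplitMono (A ◁ η)) :
    IsZero A ∨ Mono η := by
  exact weakRing_isZero_or_mono_unit_general A hD η
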